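/- Fix ε > 0. For N ≥ 1 and 1 ≤ i ≤ N, define the truncated products b*_{i,N}(x) = a_i(x)·a_{i+1}(x) if a_i(x)·a_{i+1}(x) ≤ N (log N)^{3/2+ε}, and b*_{i,N}(x) = 0 otherwise, and set S*_N(x) = ∑_{i=1}^{N} b*_{i,N}(x). Then lim_{N→∞} (∫_0^1 S*_N(x) dμ(x)) / (N (log N)^2) = 1/(2 log 2), where μ is the Gauss measure. -/

import Mathlib

/-!
The Gauss map `T` preserves the Gauss measure `μ`: the preimage of `[0, t]` is a disjoint union of
intervals whose measures telescope (`measurePreserving_gaussMap`). Hence the `N` summands have the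
same expectation, and it suffices to show
`E[a₁ a₂; a₁ a₂ ≤ M] = (log M)² / (2 log 2) + O(log M)` as `M → ∞`,
because `log (N (log N) ^ c) ~ log N`.

The cylinder `a₁ = j, a₂ = k` is an interval with
`jk · μ(a₁ = j, a₂ = k) · log 2 = 1 / (jk) + O(1 / (j² k) + 1 / (j k²))` (`cyl_upper`, `cyl_lower`).
The errors sum to `O(log M)` over `j, k ≤ M`, and the main term is
`∑_{jk ≤ M} 1 / (jk) = (log M)² / 2 + O(log M)` (`hyp_bounds`), which follows from
`H_n = log n + O(1)` and the identity `2 ∑_{j ≤ n} H_j / j = H_n² + ∑_{j ≤ n} 1 / j²`.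
-/

open MeasureTheory Filter Real Set

/-- The Gauss map `T(x) = 1/x - ⌊1/x⌋`, with `T(0) = 0`. -/
noncomputable def gaussMap (x : ℝ) : ℝ := if x = 0 then 0 else 1 / x - ⌊1 / x⌋

/-- The `n`-th partial quotient `a_n(x) = ⌊1 / T^{n-1}(x)⌋` (for `n ≥ 1`). -/
noncomputable def pq (n : ℕ) (x : ℝ) : ℕ := ⌊1 / (gaussMap^[n - 1] x)⌋₊

/-- `S_n(x) = ∑_{i=1}^n a_i(x) a_{i+1}(x)`. -/
noncomputable def S (n : ℕ) (x : ℝ) : ℕ := ∑ i ∈ Finset.Icc 1 n, pq i x * pq (i + 1) x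

/-- The Gauss measure `μ(A) = (1/log 2) ∫_A dx/(1+x)` on `(0,1)`. -/
noncomputable def gaussMeasure : Measure ℝ :=
  (volume.restrict (Set.Ioo (0:ℝ) 1)).withDensity
    (fun x => ENNReal.ofReal (1 / (Real.log 2 * (1 + x))))

/-! ### The Gauss measure of an interval -/

lemma gaussMeasure_eq : gaussMeasure = (volume.restrict (Ioc (0:ℝ) 1)).withDensity
    (fun x => ENNReal.ofReal (1 / (Real.log 2 * (1 + x)))) := by
  rw [gaussMeasure, Measure.restrict_congr_set Ioo_ae_eq_Ioc]

lemma gaussMeasure_compl : gaussMeasure (Ioc (0:ℝ) 1)ᶜ = 0 := by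
  rw [gaussMeasure_eq]
  apply withDensity_absolutelyContinuous
  rw [Measure.restrict_apply measurableSet_Ioc.compl]
  simp

instance : NullSingletonClass gaussMeasure := by
  refine ⟨fun x => ?_⟩
  rw [gaussMeasure_eq]
  apply withDensity_absolutelyContinuous
  simp

lemma gaussMeasure_inter (s : Set ℝ) : gaussMeasure (s ∩ Ioc 0 1) = gaussMeasure s :=
  measure_inter_conull gaussMeasure_compl

lemma gaussMeasure_Ioc {a b : ℝ} (ha : 0 ≤ a) (hab : a ≤ b) (hb : b ≤ 1) :
    gaussMeasure (Ioc a b) =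
      ENNReal.ofReal ((Real.log (1 + b) - Real.log (1 + a)) / Real.log 2) := by
  have hl : 0 < Real.log 2 := Real.log_pos (by norm_num)
  have hsub : Ioc a b ∩ Ioc 0 1 = Ioc a b := by
    apply inter_eq_left.2
    exact Ioc_subset_Ioc ha hb
  have hcont : ContinuousOn (fun x : ℝ => 1 / (Real.log 2 * (1 + x))) (uIcc a b) := by
    intro x hx
    rw [uIcc_of_le hab] at hx
    apply ContinuousAt.continuousWithinAt
    have : Real.log 2 * (1 + x) ≠ 0 := mul_ne_zero hl.ne' (by linarith [hx.1])
    fun_prop (disch := assumption)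
  rw [gaussMeasure_eq, withDensity_apply _ measurableSet_Ioc,
    Measure.restrict_restrict measurableSet_Ioc, hsub,
    ← ofReal_integral_eq_lintegral_ofReal, ← intervalIntegral.integral_of_le hab,
    intervalIntegral.integral_eq_sub_of_hasDerivAt
      (f := fun x => Real.log (1 + x) / Real.log 2)]
  · congr 1; ring
  · intro x hx
    rw [uIcc_of_le hab] at hx
    have h1 : 1 + x ≠ 0 := by linarith [hx.1]
    have := (((hasDerivAt_id x).const_add 1).log h1).div_const (Real.log 2)
    rwa [div_div, mul_comm] at this
  · exact hcont.intervalIntegrable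
  · exact (hcont.intervalIntegrable (μ := volume)).1
  · refine (ae_restrict_iff' measurableSet_Ioc).2 (Eventually.of_forall fun x hx => ?_)
    have : 0 < 1 + x := by linarith [hx.1]
    simp only [Pi.zero_apply]
    positivity

lemma gaussMeasure_Icc {a b : ℝ} (ha : 0 ≤ a) (hab : a ≤ b) (hb : b ≤ 1) :
    gaussMeasure (Icc a b) =
      ENNReal.ofReal ((Real.log (1 + b) - Real.log (1 + a)) / Real.log 2) := by
  rw [← measure_congr Ioc_ae_eq_Icc, gaussMeasure_Ioc ha hab hb]

lemma gaussMeasure_Ioo {a b : ℝ} (ha : 0 ≤ a) (hab : a ≤ b) (hb : b ≤ 1) :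
    gaussMeasure (Ioo a b) =
      ENNReal.ofReal ((Real.log (1 + b) - Real.log (1 + a)) / Real.log 2) := by
  rw [measure_congr Ioo_ae_eq_Ioc, gaussMeasure_Ioc ha hab hb]

instance : IsProbabilityMeasure gaussMeasure := by
  refine ⟨?_⟩
  rw [← gaussMeasure_inter, univ_inter, gaussMeasure_Ioc le_rfl zero_le_one le_rfl]
  have hl : 0 < Real.log 2 := Real.log_pos (by norm_num)
  norm_num [hl.ne']

/-! ### Invariance under the Gauss map -/

lemma measurable_gaussMap : Measurable gaussMap := by
  unfold gaussMap
  refine Measurable.ite (measurableSet_singleton 0) measurable_const ?_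
  have h : Measurable fun x : ℝ => 1 / x := by fun_prop
  exact h.sub ((measurable_from_top (f := fun n : ℤ => (n : ℝ))).comp h.floor)

lemma gaussMap_nonneg (x : ℝ) : 0 ≤ gaussMap x := by
  unfold gaussMap
  split_ifs
  · rfl
  · linarith [Int.floor_le (1 / x)]

lemma gaussMap_lt_one (x : ℝ) : gaussMap x < 1 := by
  unfold gaussMap
  split_ifs
  · norm_num
  · linarith [Int.lt_floor_add_one (1 / x)]

/-- Up to the null set outside `(0, 1]`, the event `T x ≤ t` is the union over the first digit
`k + 1` of the branches `k + 1 ≤ 1 / x ≤ k + 1 + t`. -/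
lemma preimage_Iic {t : ℝ} (ht : 0 ≤ t) (ht1 : t < 1) :
    gaussMap ⁻¹' (Iic t) ∩ Ioc 0 1 =
      ⋃ k : ℕ, Icc (1 / ((k : ℝ) + 1 + t)) (1 / ((k : ℝ) + 1)) := by
  ext x
  simp only [mem_inter_iff, mem_preimage, mem_Iic, mem_Ioc, mem_iUnion, mem_Icc]
  constructor
  · rintro ⟨h, h0, h1⟩
    rw [gaussMap, if_neg h0.ne'] at h
    have hx1 : 1 ≤ 1 / x := by rwa [le_div_iff₀ h0, one_mul]
    have hm : 1 ≤ ⌊1 / x⌋ := Int.le_floor.2 (by exact_mod_cast hx1)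
    obtain ⟨k, hk⟩ := Int.eq_ofNat_of_zero_le (sub_nonneg.2 hm)
    have hk' : (⌊1 / x⌋ : ℝ) = k + 1 := by
      have : ⌊1 / x⌋ = k + 1 := by linarith
      rw [this]; push_cast; rfl
    have hf := Int.floor_le (1 / x)
    rw [hk'] at h hf
    refine ⟨k, ?_, ?_⟩
    · rw [div_le_iff₀ (by positivity)]
      rw [sub_le_iff_le_add, div_le_iff₀ h0] at h
      linarith
    · rw [le_div_iff₀ (by positivity)]
      rw [le_div_iff₀ h0] at hf
      linarith
  · rintro ⟨k, h1, h2⟩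
    have hx : 0 < x := lt_of_lt_of_le (by positivity) h1
    rw [div_le_iff₀ (by positivity)] at h1
    rw [le_div_iff₀ (by positivity)] at h2
    have h3 : (k : ℝ) + 1 ≤ 1 / x := by rw [le_div_iff₀ hx]; linarith
    have h4 : 1 / x ≤ (k : ℝ) + 1 + t := by rw [div_le_iff₀ hx]; linarith
    have hf : ⌊1 / x⌋ = (k : ℤ) + 1 := by
      rw [Int.floor_eq_iff]; push_cast; constructor <;> linarith
    refine ⟨?_, hx, ?_⟩
    · rw [gaussMap, if_neg hx.ne', hf]; push_cast; linarith
    · have : (0:ℝ) ≤ k * x := by positivity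
      nlinarith

lemma disjoint_branches {t : ℝ} (ht : 0 ≤ t) (ht1 : t < 1) :
    Pairwise (Function.onFun Disjoint
      fun k : ℕ => Icc (1 / ((k : ℝ) + 1 + t)) (1 / ((k : ℝ) + 1))) := by
  have key : ∀ (k : ℕ) (x : ℝ), x ∈ Icc (1 / ((k : ℝ) + 1 + t)) (1 / ((k : ℝ) + 1)) →
      ⌊1 / x⌋₊ = k + 1 := by
    rintro k x ⟨h1, h2⟩
    have hx : 0 < x := lt_of_lt_of_le (by positivity) h1
    rw [div_le_iff₀ (by positivity)] at h1
    rw [le_div_iff₀ (by positivity)] at h2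
    have h3 : (k : ℝ) + 1 ≤ 1 / x := by rw [le_div_iff₀ hx]; linarith
    have h4 : 1 / x ≤ (k : ℝ) + 1 + t := by rw [div_le_iff₀ hx]; linarith
    rw [Nat.floor_eq_iff (by positivity)]; push_cast; constructor <;> linarith
  intro j k hjk
  refine Set.disjoint_left.2 fun x hj hk => hjk ?_
  have := (key j x hj).symm.trans (key k x hk)
  omega

/-- The measures of the branches `[1/(k+1+t), 1/(k+1)]` telescope to that of `[0, t]`. -/
lemma hasSum_branches {t : ℝ} (ht : 0 ≤ t) :
    HasSum (fun k : ℕ => (Real.log (1 + 1 / ((k : ℝ) + 1)) -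
      Real.log (1 + 1 / ((k : ℝ) + 1 + t))) / Real.log 2) (Real.log (1 + t) / Real.log 2) := by
  have hl : 0 < Real.log 2 := Real.log_pos (by norm_num)
  rw [hasSum_iff_tendsto_nat_of_nonneg]
  · have hs : ∀ n : ℕ, ∑ k ∈ Finset.range n, (Real.log (1 + 1 / ((k : ℝ) + 1)) -
        Real.log (1 + 1 / ((k : ℝ) + 1 + t))) / Real.log 2 =
        (Real.log (1 + t) - Real.log (1 + t / ((n : ℝ) + 1))) / Real.log 2 := by
      intro n
      induction n with
      | zero => simp
      | succ n ih =>
        rw [Finset.sum_range_succ, ih, ← add_div]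
        congr 1
        have e1 : 1 + t / ((n : ℝ) + 1) = (n + 1 + t) / (n + 1) := by field_simp
        have e2 : 1 + t / (((n + 1 : ℕ) : ℝ) + 1) = (n + 2 + t) / (n + 2) := by
          push_cast; field_simp; ring
        have e3 : 1 + 1 / ((n : ℝ) + 1) = (n + 2) / (n + 1) := by field_simp; ring
        have e4 : 1 + 1 / ((n : ℝ) + 1 + t) = (n + 2 + t) / (n + 1 + t) := by field_simp; ring
        rw [e1, e2, e3, e4, Real.log_div, Real.log_div, Real.log_div, Real.log_div]
        · ring
        all_goals positivity
    simp_rw [hs]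
    have h1 : Tendsto (fun n : ℕ => 1 + t / ((n : ℝ) + 1)) atTop (nhds (1 + 0)) := by
      refine tendsto_const_nhds.add ?_
      have := (tendsto_one_div_add_atTop_nhds_zero_nat (𝕜 := ℝ)).const_mul t
      simpa [div_eq_mul_inv] using this
    have h2 := (Real.continuousAt_log (by norm_num : (1 + 0 : ℝ) ≠ 0)).tendsto.comp h1
    have h3 := (h2.const_sub (Real.log (1 + t))).div_const (Real.log 2)
    simpa using h3
  · intro k
    apply div_nonneg _ hl.le
    rw [sub_nonneg]
    apply Real.log_le_log (by positivity)
    have := one_div_le_one_div_of_le (by positivity : (0:ℝ) < k + 1) (by linarith : (k:ℝ) + 1 ≤ k + 1 + t)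
    linarith

lemma gaussMeasure_Iic {t : ℝ} (ht : 0 ≤ t) (ht1 : t < 1) :
    gaussMeasure (Iic t) = ENNReal.ofReal (Real.log (1 + t) / Real.log 2) := by
  rw [← gaussMeasure_inter]
  have : Iic t ∩ Ioc 0 1 = Ioc 0 t := by
    ext x; simp only [mem_inter_iff, mem_Iic, mem_Ioc]; constructor
    · rintro ⟨h, h0, _⟩; exact ⟨h0, h⟩
    · rintro ⟨h, h0⟩; exact ⟨h0, h, by linarith⟩
  rw [this, gaussMeasure_Ioc le_rfl ht ht1.le]
  simp

theorem measurePreserving_gaussMap : MeasurePreserving gaussMap gaussMeasure gaussMeasure := by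
  refine ⟨measurable_gaussMap, ?_⟩
  have : IsProbabilityMeasure (gaussMeasure.map gaussMap) :=
    Measure.isProbabilityMeasure_map measurable_gaussMap.aemeasurable
  refine Measure.ext_of_Iic _ _ fun t => ?_
  rw [Measure.map_apply measurable_gaussMap measurableSet_Iic]
  rcases lt_or_ge t 0 with ht | ht
  · have e1 : gaussMap ⁻¹' (Iic t) = ∅ := by
      ext x; simp only [mem_preimage, mem_Iic, mem_empty_iff_false, iff_false, not_le]
      exact ht.trans_le (gaussMap_nonneg x)
    have e2 : Iic t ∩ Ioc 0 1 = ∅ := by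
      ext x; simp only [mem_inter_iff, mem_Iic, mem_Ioc, mem_empty_iff_false, iff_false]
      rintro ⟨h, h0, _⟩; linarith
    rw [e1, ← gaussMeasure_inter (Iic t), e2]
  rcases lt_or_ge t 1 with ht1 | ht1
  · rw [← gaussMeasure_inter, preimage_Iic ht ht1,
      measure_iUnion (disjoint_branches ht ht1) (fun _ => measurableSet_Icc),
      gaussMeasure_Iic ht ht1]
    have hs := hasSum_branches ht
    have hle : ∀ k : ℕ, 1 / ((k : ℝ) + 1 + t) ≤ 1 / ((k : ℝ) + 1) := by
      exact fun k => one_div_le_one_div_of_le (by positivity) (by linarith)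
    rw [← hs.tsum_eq, ENNReal.ofReal_tsum_of_nonneg _ hs.summable]
    · congr 1
      ext1 k
      rw [gaussMeasure_Icc (by positivity) (hle k)]
      rw [div_le_one (by positivity)]
      linarith [(Nat.cast_nonneg k : (0:ℝ) ≤ k)]
    · intro k
      apply div_nonneg _ (Real.log_nonneg (by norm_num))
      rw [sub_nonneg]
      apply Real.log_le_log (by positivity)
      linarith [hle k]
  · have e1 : gaussMap ⁻¹' (Iic t) = univ := by
      ext x; simp only [mem_preimage, mem_Iic, mem_univ, iff_true]
      exact (gaussMap_lt_one x).le.trans ht1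
    have e2 : Iic t ∩ Ioc 0 1 = univ ∩ Ioc 0 1 := by
      ext x; simp only [mem_inter_iff, mem_Iic, mem_Ioc, mem_univ, true_and]
      constructor
      · exact fun h => h.2
      · exact fun h => ⟨h.2.trans ht1, h⟩
    rw [e1, ← gaussMeasure_inter (Iic t), e2, gaussMeasure_inter]

/-! ### Cylinder sets of the first two digits -/

/-- The set of points of `(0, 1]` whose first two partial quotients are `j` and `k`. -/
def cyl (j k : ℕ) : Set ℝ := {x | pq 1 x = j ∧ pq 2 x = k} ∩ Ioc 0 1

lemma pq_one (x : ℝ) : pq 1 x = ⌊1 / x⌋₊ := rfl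

lemma pq_two (x : ℝ) : pq 2 x = ⌊1 / gaussMap x⌋₊ := rfl

lemma gaussMap_of_floor {x : ℝ} (hx : 0 < x) {j : ℕ} (hj : ⌊1 / x⌋₊ = j) :
    gaussMap x = 1 / x - j := by
  rw [gaussMap, if_neg hx.ne', ← hj, natCast_floor_eq_intCast_floor (by positivity)]

lemma cyl_subset {j k : ℕ} (hj : 1 ≤ j) (hk : 1 ≤ k) :
    cyl j k ⊆ Icc ((k : ℝ) / (j * k + 1)) ((k + 1) / (j * (k + 1) + 1)) := by
  rintro x ⟨⟨h1, h2⟩, h0, -⟩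
  have hk' : (0 : ℝ) < k := by exact_mod_cast hk
  have hj' : (0 : ℝ) < j := by exact_mod_cast hj
  rw [pq_one] at h1
  rw [pq_two, gaussMap_of_floor h0 h1, Nat.floor_eq_iff' (by omega)] at h2
  have hy : 0 < 1 / x - j := by
    by_contra! hneg
    have := one_div_nonpos.2 hneg
    linarith [h2.1]
  obtain ⟨h3, h4⟩ := h2
  rw [le_div_iff₀ hy] at h3
  rw [div_lt_iff₀ hy] at h4
  have e : x * (1 / x) = 1 := by field_simp
  have h3' := mul_le_mul_of_nonneg_left h3 h0.le
  have h4' := mul_lt_mul_of_pos_left h4 h0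
  constructor
  · rw [div_le_iff₀ (by positivity)]
    nlinarith
  · rw [le_div_iff₀ (by positivity)]
    nlinarith

lemma subset_cyl {j k : ℕ} (hj : 1 ≤ j) (hk : 1 ≤ k) :
    Ioo ((k : ℝ) / (j * k + 1)) ((k + 1) / (j * (k + 1) + 1)) ⊆ cyl j k := by
  rintro x ⟨h1, h2⟩
  have hk' : (1 : ℝ) ≤ k := by exact_mod_cast hk
  have hj' : (1 : ℝ) ≤ j := by exact_mod_cast hj
  have h0 : 0 < x := lt_trans (by positivity) h1
  rw [div_lt_iff₀ (by positivity)] at h1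
  rw [lt_div_iff₀ (by positivity)] at h2
  have hj1 : ⌊1 / x⌋₊ = j := by
    rw [Nat.floor_eq_iff (by positivity), le_div_iff₀ h0, div_lt_iff₀ h0]
    constructor
    · nlinarith
    · nlinarith
  have e : x * (1 / x) = 1 := by field_simp
  refine ⟨⟨hj1, ?_⟩, h0, ?_⟩
  · have hy : 0 < 1 / x - j := by
      rw [sub_pos, lt_div_iff₀ h0]
      nlinarith
    rw [pq_two, gaussMap_of_floor h0 hj1, Nat.floor_eq_iff (by positivity), le_div_iff₀ hy,
      div_lt_iff₀ hy]
    constructor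
    · apply le_of_mul_le_mul_left _ h0
      nlinarith
    · apply lt_of_mul_lt_mul_left _ h0.le
      nlinarith
  · nlinarith [mul_nonneg (sub_nonneg.2 hj') (by positivity : (0:ℝ) ≤ x * (k + 1))]

lemma cyl_ends {j k : ℕ} (hj : 1 ≤ j) :
    (0 : ℝ) ≤ (k : ℝ) / (j * k + 1) ∧
    (k : ℝ) / (j * k + 1) ≤ (k + 1) / (j * (k + 1) + 1) ∧
    ((k : ℝ) + 1) / (j * (k + 1) + 1) ≤ 1 := by
  have hj' : (1 : ℝ) ≤ j := by exact_mod_cast hj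
  refine ⟨by positivity, ?_, ?_⟩
  · rw [div_le_div_iff₀ (by positivity) (by positivity)]
    nlinarith
  · rw [div_le_one (by positivity)]
    nlinarith [(Nat.cast_nonneg k : (0:ℝ) ≤ k)]

/-- Up to its endpoints `cyl j k` is the interval between `1 / (j + 1 / k)` and
`1 / (j + 1 / (k + 1))`. -/
lemma gaussMeasure_cyl {j k : ℕ} (hj : 1 ≤ j) (hk : 1 ≤ k) :
    gaussMeasure.real (cyl j k) =
      (Real.log (1 + ((k : ℝ) + 1) / (j * (k + 1) + 1)) -
        Real.log (1 + (k : ℝ) / (j * k + 1))) / Real.log 2 := by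
  obtain ⟨h1, h2, h3⟩ := cyl_ends (k := k) hj
  have hn : 0 ≤ (Real.log (1 + ((k : ℝ) + 1) / (j * (k + 1) + 1)) -
        Real.log (1 + (k : ℝ) / (j * k + 1))) / Real.log 2 := by
    apply div_nonneg _ (Real.log_nonneg (by norm_num))
    rw [sub_nonneg]
    exact Real.log_le_log (by positivity) (by linarith)
  have : gaussMeasure (cyl j k) = ENNReal.ofReal _ := le_antisymm
    ((measure_mono (cyl_subset hj hk)).trans_eq (gaussMeasure_Icc h1 h2 h3))
    ((gaussMeasure_Ioo h1 h2 h3).symm.trans_le (measure_mono (subset_cyl hj hk)))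
  rw [Measure.real, this, ENNReal.toReal_ofReal hn]

lemma log_sub_log_bounds {u v : ℝ} (hu : 0 < u) (hv : 0 < v) :
    (v - u) / v ≤ Real.log v - Real.log u ∧ Real.log v - Real.log u ≤ (v - u) / u := by
  constructor
  · have := Real.one_sub_inv_le_log_of_pos (div_pos hv hu)
    rw [Real.log_div hv.ne' hu.ne', inv_div] at this
    rw [sub_div, div_self hv.ne']
    exact this
  · have := Real.log_le_sub_one_of_pos (div_pos hv hu)
    rw [Real.log_div hv.ne' hu.ne'] at this
    rw [sub_div, div_self hu.ne']
    exact this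

lemma cyl_upper {j k : ℕ} (hj : 1 ≤ j) (hk : 1 ≤ k) :
    (j * k : ℝ) * gaussMeasure.real (cyl j k) ≤ 1 / (j * k) / Real.log 2 := by
  have hl : 0 < Real.log 2 := Real.log_pos (by norm_num)
  have hk' : (1 : ℝ) ≤ k := by exact_mod_cast hk
  have hj' : (1 : ℝ) ≤ j := by exact_mod_cast hj
  rw [gaussMeasure_cyl hj hk, ← mul_div_assoc]
  gcongr
  refine (mul_le_mul_of_nonneg_left (log_sub_log_bounds (by positivity) (by positivity)).2
    (by positivity)).trans ?_
  have : (1 + ((k : ℝ) + 1) / (j * (k + 1) + 1) - (1 + k / (j * k + 1))) / (1 + k / (j * k + 1))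
      = 1 / ((j * (k + 1) + 1) * (j * k + 1 + k)) := by
    field_simp; ring
  rw [this, mul_one_div, div_le_div_iff₀ (by positivity) (by positivity), one_mul]
  gcongr <;> nlinarith

lemma cyl_lower {j k : ℕ} (hj : 1 ≤ j) (hk : 1 ≤ k) :
    (1 / (j * k) - 2 / (j ^ 2 * k) - 2 / (j * k ^ 2)) / Real.log 2 ≤
      (j * k : ℝ) * gaussMeasure.real (cyl j k) := by
  have hl : 0 < Real.log 2 := Real.log_pos (by norm_num)
  have hk' : (1 : ℝ) ≤ k := by exact_mod_cast hk
  have hj' : (1 : ℝ) ≤ j := by exact_mod_cast hj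
  rw [gaussMeasure_cyl hj hk, ← mul_div_assoc]
  gcongr
  refine le_trans ?_ (mul_le_mul_of_nonneg_left
    (log_sub_log_bounds (by positivity) (by positivity)).1 (by positivity))
  have : (1 + ((k : ℝ) + 1) / (j * (k + 1) + 1) - (1 + k / (j * k + 1))) /
      (1 + (k + 1) / (j * (k + 1) + 1)) = 1 / ((j * k + 1) * (j * k + j + k + 2)) := by
    field_simp; ring
  rw [this, mul_one_div]
  have e : 1 / ((j:ℝ) * k) - 2 / (j ^ 2 * k) - 2 / (j * k ^ 2) =
      (j * k - 2 * k - 2 * j) / (j * k) ^ 2 := by field_simp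
  rw [e, div_le_div_iff₀ (by positivity) (by positivity)]
  -- With `P = jk` and `s = j + k` the claim is `(P - 2 s) (P + 1) (P + s + 2) ≤ P ^ 3`; the only
  -- delicate term of the expansion is `P ^ 2 (3 - s)`, positive only for `j = k = 1`.
  have hP : (0:ℝ) < j * k := by positivity
  have hs : (2:ℝ) ≤ j + k := by linarith
  have hPs : (j * k : ℝ) ≤ (j + k) ^ 2 := by nlinarith
  have h1 : (j * k : ℝ) ^ 2 * (3 - (j + k)) ≤ (j * k) * (j + k) ^ 2 :=
    calc (j * k : ℝ) ^ 2 * (3 - (j + k)) ≤ (j * k : ℝ) ^ 2 * (1 : ℝ) := by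
          gcongr; linarith
      _ = (j * k : ℝ) * (j * k) := by ring
      _ ≤ (j * k : ℝ) * (j + k) ^ 2 := by gcongr
  have h2 : (0 : ℝ) ≤ (j * k) * (j + k - 2) := mul_nonneg hP.le (by linarith)
  have h3 : (0 : ℝ) ≤ (j * k) * (j + k) ^ 2 := by positivity
  have h4 : (0 : ℝ) ≤ (j + k) * (j + k + 2) := by positivity
  linear_combination h1 + 5 * h2 + h3 + 2 * h4 + 8 * hP

/-! ### The truncated sum of `1 / (j k)` -/

/-- The harmonic number as a real sum. -/
noncomputable def Hm (n : ℕ) : ℝ := ∑ i ∈ Finset.Icc 1 n, 1 / (i : ℝ)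

lemma Hm_eq (n : ℕ) : Hm n = (harmonic n : ℝ) := by
  rw [harmonic_eq_sum_Icc, Hm]; push_cast; simp

lemma Hm_nonneg (n : ℕ) : 0 ≤ Hm n := Finset.sum_nonneg fun _ _ => by positivity

lemma log_le_Hm {y : ℝ} (hy : 0 ≤ y) : Real.log y ≤ Hm ⌊y⌋₊ := by
  rw [Hm_eq]; exact log_le_harmonic_floor y hy

lemma Hm_le_log {y : ℝ} (hy : 1 ≤ y) : Hm ⌊y⌋₊ ≤ 1 + Real.log y := by
  rw [Hm_eq]; exact harmonic_floor_le_one_add_log y hy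

lemma sum_sq_le (n : ℕ) : ∑ i ∈ Finset.Icc 1 n, 1 / (i : ℝ) ^ 2 ≤ 2 := by
  have := sum_Ioo_inv_sq_le (α := ℝ) 0 (n + 1)
  have e : Finset.Ioo 0 (n + 1) = Finset.Icc 1 n := by ext; simp; omega
  rw [e] at this
  simpa [one_div] using this

/-- Abel summation: `H_j ^ 2 - H_{j-1} ^ 2 = 2 H_j / j - 1 / j ^ 2`. -/
lemma sum_Hm_div (n : ℕ) : 2 * ∑ j ∈ Finset.Icc 1 n, Hm j / (j : ℝ) =
    Hm n ^ 2 + ∑ i ∈ Finset.Icc 1 n, 1 / (i : ℝ) ^ 2 := by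
  induction n with
  | zero => simp [Hm]
  | succ n ih =>
    have e : Hm (n + 1) = Hm n + 1 / ((n + 1 : ℕ) : ℝ) := by
      rw [Hm, Finset.sum_Icc_succ_top (by omega)]; rfl
    rw [Finset.sum_Icc_succ_top (by omega), Finset.sum_Icc_succ_top (by omega), mul_add, ih, e]
    have : ((n + 1 : ℕ) : ℝ) ≠ 0 := by positivity
    field_simp
    ring

/-- `∑_{jk ≤ M} 1 / (j k)`. -/
noncomputable def hyp (M : ℝ) : ℝ :=
  ∑ j ∈ Finset.Icc 1 ⌊M⌋₊, ∑ k ∈ Finset.Icc 1 ⌊M⌋₊,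
    if (j * k : ℝ) ≤ M then 1 / (j * k : ℝ) else 0

/-- For fixed `j` the condition `jk ≤ M` reads `k ≤ ⌊M / j⌋`. -/
lemma hyp_eq (M : ℝ) : hyp M = ∑ j ∈ Finset.Icc 1 ⌊M⌋₊, Hm ⌊M / j⌋₊ / (j : ℝ) := by
  unfold hyp
  refine Finset.sum_congr rfl fun j hj => ?_
  obtain ⟨hj1, hjM⟩ := Finset.mem_Icc.1 hj
  have hj' : (1 : ℝ) ≤ j := by exact_mod_cast hj1
  have hM : 0 < M := (by linarith : (0:ℝ) < j).trans_le ((Nat.le_floor_iff' (by omega)).1 hjM)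
  rw [← Finset.sum_filter, Hm, Finset.sum_div]
  have : Finset.filter (fun k : ℕ => (j * k : ℝ) ≤ M) (Finset.Icc 1 ⌊M⌋₊) =
      Finset.Icc 1 ⌊M / j⌋₊ := by
    ext k
    simp only [Finset.mem_filter, Finset.mem_Icc]
    have h1 : k ≤ ⌊M / j⌋₊ ↔ (j * k : ℝ) ≤ M := by
      rw [Nat.le_floor_iff (by positivity), le_div_iff₀ (by positivity), mul_comm]
    rw [h1, Nat.le_floor_iff hM.le]
    constructor
    · exact fun h => ⟨h.1.1, h.2⟩
    · refine fun h => ⟨⟨h.1, ?_⟩, h.2⟩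
      nlinarith [h.2, (Nat.cast_nonneg k : (0:ℝ) ≤ k)]
  rw [this]
  refine Finset.sum_congr rfl fun k _ => ?_
  rw [div_div, mul_comm]

/-- Since `H_{⌊M/j⌋} = log M - H_j + O(1)`, the sum is `(log M) H_n - ∑ H_j / j + O(H_n)` with
`n = ⌊M⌋`, and `sum_Hm_div` evaluates the middle term. -/
lemma hyp_bounds {M : ℝ} (hM : 1 ≤ M) :
    Real.log M ^ 2 / 2 - 3 * (Real.log M + 1) ≤ hyp M ∧
      hyp M ≤ Real.log M ^ 2 / 2 + 3 * (Real.log M + 1) := by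
  set L := Real.log M with hL
  have hL0 : 0 ≤ L := Real.log_nonneg hM
  set n := ⌊M⌋₊ with hn
  have hH1 : L ≤ Hm n := log_le_Hm (by linarith)
  have hH2 : Hm n ≤ 1 + L := Hm_le_log hM
  have hQ := sum_sq_le n
  have hQ0 : 0 ≤ ∑ i ∈ Finset.Icc 1 n, 1 / (i : ℝ) ^ 2 :=
    Finset.sum_nonneg fun _ _ => by positivity
  have hA := sum_Hm_div n
  have expand : ∀ c : ℝ, ∑ j ∈ Finset.Icc 1 n, (c - Hm j) / (j : ℝ) =
      c * Hm n - ∑ j ∈ Finset.Icc 1 n, Hm j / (j : ℝ) := by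
    intro c
    simp_rw [sub_div]
    rw [Finset.sum_sub_distrib, Hm, Finset.mul_sum]
    simp_rw [mul_one_div]
  have hterm : ∀ j ∈ Finset.Icc 1 n, (L - Hm j) / (j : ℝ) ≤ Hm ⌊M / j⌋₊ / (j : ℝ) ∧
      Hm ⌊M / j⌋₊ / (j : ℝ) ≤ (L + 2 - Hm j) / (j : ℝ) := by
    intro j hj
    obtain ⟨hj1, hjM⟩ := Finset.mem_Icc.1 hj
    have hj' : (1 : ℝ) ≤ j := by exact_mod_cast hj1
    have hjM' : (j : ℝ) ≤ M := (Nat.le_floor_iff' (by omega)).1 hjM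
    have h1 : Real.log (M / j) = L - Real.log j := Real.log_div (by positivity) (by positivity)
    have h2 := log_le_Hm (y := M / j) (by positivity)
    have h3 := Hm_le_log (y := M / j) ((one_le_div (by positivity)).2 hjM')
    have h4 := log_le_Hm (y := j) (by positivity)
    have h5 := Hm_le_log (y := j) hj'
    rw [Nat.floor_natCast] at h4 h5
    constructor <;> gcongr <;> linarith
  rw [hyp_eq]
  have hlow := Finset.sum_le_sum fun j hj => (hterm j hj).1
  have hup := Finset.sum_le_sum fun j hj => (hterm j hj).2
  rw [expand] at hlow hup
  constructor <;> nlinarith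

/-! ### The truncated expectation -/

/-- The product of the first two digits, truncated at height `M`. -/
noncomputable def tr (M x : ℝ) : ℝ :=
  if ((pq 1 x * pq 2 x : ℕ) : ℝ) ≤ M then ((pq 1 x * pq 2 x : ℕ) : ℝ) else 0

lemma measurable_pq (n : ℕ) : Measurable (pq n) := by
  unfold pq
  have h : Measurable fun x : ℝ => 1 / x := by fun_prop
  exact (h.comp (measurable_gaussMap.iterate (n - 1))).nat_floor

lemma measurable_tr (M : ℝ) : Measurable (tr M) := by
  unfold tr
  have h : Measurable fun x => ((pq 1 x * pq 2 x : ℕ) : ℝ) :=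
    (measurable_from_top (f := fun n : ℕ => (n : ℝ))).comp
      ((measurable_pq 1).mul (measurable_pq 2))
  exact Measurable.ite (measurableSet_le h measurable_const) h measurable_const

lemma measurableSet_cyl (j k : ℕ) : MeasurableSet (cyl j k) :=
  (((measurable_pq 1) (measurableSet_singleton j)).inter
    ((measurable_pq 2) (measurableSet_singleton k))).inter measurableSet_Ioc

lemma tr_bounds {M : ℝ} (hM : 0 ≤ M) (x : ℝ) : ‖tr M x‖ ≤ M := by
  unfold tr
  split_ifs with h
  · rw [Real.norm_of_nonneg (by positivity)]; exact h
  · simpa using hM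

lemma integrable_tr {M : ℝ} (hM : 0 ≤ M) : Integrable (tr M) gaussMeasure :=
  Integrable.of_bound (measurable_tr M).aestronglyMeasurable M
    (Eventually.of_forall (tr_bounds hM))

lemma tr_eq_sum {M : ℝ} (hM : 0 ≤ M) {x : ℝ} (hx : x ∈ Ioc (0:ℝ) 1) :
    tr M x = ∑ p ∈ Finset.Icc 1 ⌊M⌋₊ ×ˢ Finset.Icc 1 ⌊M⌋₊,
      (cyl p.1 p.2).indicator (fun _ => if (p.1 * p.2 : ℝ) ≤ M then (p.1 * p.2 : ℝ) else 0) x := by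
  have h : ∀ p : ℕ × ℕ, (cyl p.1 p.2).indicator
      (fun _ => if (p.1 * p.2 : ℝ) ≤ M then (p.1 * p.2 : ℝ) else 0) x =
      if (pq 1 x, pq 2 x) = p then (if (p.1 * p.2 : ℝ) ≤ M then (p.1 * p.2 : ℝ) else 0) else 0 := by
    rintro ⟨j, k⟩
    have hiff : x ∈ cyl j k ↔ (pq 1 x, pq 2 x) = (j, k) := by simp [cyl, hx.1, hx.2]
    by_cases h : (pq 1 x, pq 2 x) = (j, k)
    · rw [if_pos h, indicator_of_mem (hiff.2 h)]
    · rw [if_neg h, indicator_of_notMem fun h' => h (hiff.1 h')]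
  simp_rw [h]
  rw [Finset.sum_ite_eq]
  unfold tr
  push_cast
  by_cases hle : (pq 1 x * pq 2 x : ℝ) ≤ M
  · simp only [hle, if_true]
    split_ifs with hmem
    · rfl
    -- A digit is `0` when the previous iterate vanishes; the product is then `0` as well.
    · rw [Finset.mem_product, Finset.mem_Icc, Finset.mem_Icc] at hmem
      by_contra hne
      have h1 : pq 1 x ≠ 0 := fun h0 => hne (by simp [h0])
      have h2 : pq 2 x ≠ 0 := fun h0 => hne (by simp [h0])
      have h1' : (1 : ℝ) ≤ pq 1 x := by exact_mod_cast Nat.one_le_iff_ne_zero.2 h1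
      have h2' : (1 : ℝ) ≤ pq 2 x := by exact_mod_cast Nat.one_le_iff_ne_zero.2 h2
      refine hmem ⟨⟨by omega, ?_⟩, by omega, ?_⟩
      · rw [Nat.le_floor_iff hM]; nlinarith
      · rw [Nat.le_floor_iff hM]; nlinarith
  · simp [hle]

lemma integral_tr {M : ℝ} (hM : 0 ≤ M) :
    ∫ x, tr M x ∂gaussMeasure = ∑ j ∈ Finset.Icc 1 ⌊M⌋₊, ∑ k ∈ Finset.Icc 1 ⌊M⌋₊,
      if (j * k : ℝ) ≤ M then (j * k : ℝ) * gaussMeasure.real (cyl j k) else 0 := by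
  have hae : ∀ᵐ x ∂gaussMeasure, x ∈ Ioc (0:ℝ) 1 := gaussMeasure_compl
  rw [integral_congr_ae (hae.mono fun x hx => tr_eq_sum hM hx), integral_finsetSum,
    Finset.sum_product]
  · refine Finset.sum_congr rfl fun j _ => Finset.sum_congr rfl fun k _ => ?_
    rw [integral_indicator (measurableSet_cyl j k), setIntegral_const, smul_eq_mul, mul_ite,
      mul_zero, mul_comm (gaussMeasure.real _)]
  · exact fun p _ => (integrable_const _).indicator (measurableSet_cyl _ _)

/-- The expectation is compared with `hyp M` cylinder by cylinder. In the lower bound the error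
terms of `cyl_lower` are summed over the whole square, where they amount to `O(log M)`. -/
lemma integral_tr_bounds {M : ℝ} (hM : 1 ≤ M) :
    |Real.log 2 * ∫ x, tr M x ∂gaussMeasure - Real.log M ^ 2 / 2| ≤ 11 * (Real.log M + 1) := by
  have hl : 0 < Real.log 2 := Real.log_pos (by norm_num)
  have hM0 : 0 ≤ M := by linarith
  have hL0 : 0 ≤ Real.log M := Real.log_nonneg hM
  obtain ⟨h1, h2⟩ := hyp_bounds hM
  set n := ⌊M⌋₊ with hn
  have hup : Real.log 2 * ∫ x, tr M x ∂gaussMeasure ≤ hyp M := by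
    rw [integral_tr hM0, hyp, Finset.mul_sum]
    refine Finset.sum_le_sum fun j hj => ?_
    rw [Finset.mul_sum]
    refine Finset.sum_le_sum fun k hk => ?_
    rw [mul_ite, mul_zero]
    split_ifs
    · have := cyl_upper (Finset.mem_Icc.1 hj).1 (Finset.mem_Icc.1 hk).1
      rw [le_div_iff₀ hl] at this
      linarith
    · rfl
  have hlow : hyp M - ∑ j ∈ Finset.Icc 1 n, ∑ k ∈ Finset.Icc 1 n,
      (2 / ((j:ℝ) ^ 2 * k) + 2 / ((j : ℝ) * k ^ 2)) ≤
        Real.log 2 * ∫ x, tr M x ∂gaussMeasure := by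
    rw [integral_tr hM0, hyp, Finset.mul_sum, ← Finset.sum_sub_distrib]
    refine Finset.sum_le_sum fun j hj => ?_
    rw [Finset.mul_sum, ← Finset.sum_sub_distrib]
    refine Finset.sum_le_sum fun k hk => ?_
    rw [mul_ite, mul_zero]
    split_ifs
    · have := cyl_lower (Finset.mem_Icc.1 hj).1 (Finset.mem_Icc.1 hk).1
      rw [div_le_iff₀ hl] at this
      linarith
    · rw [zero_sub, neg_nonpos]; positivity
  have herr : ∑ j ∈ Finset.Icc 1 n, ∑ k ∈ Finset.Icc 1 n,
      (2 / ((j:ℝ) ^ 2 * k) + 2 / ((j : ℝ) * k ^ 2)) =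
      4 * ((∑ i ∈ Finset.Icc 1 n, 1 / (i : ℝ) ^ 2) * Hm n) := by
    have e1 : (∑ i ∈ Finset.Icc 1 n, 1 / (i : ℝ) ^ 2) * Hm n =
        ∑ j ∈ Finset.Icc 1 n, ∑ k ∈ Finset.Icc 1 n, 1 / ((j:ℝ) ^ 2 * k) := by
      rw [Hm, Finset.sum_mul_sum]; simp_rw [div_mul_div_comm, one_mul]
    have e2 : Hm n * (∑ i ∈ Finset.Icc 1 n, 1 / (i : ℝ) ^ 2) =
        ∑ j ∈ Finset.Icc 1 n, ∑ k ∈ Finset.Icc 1 n, 1 / ((j:ℝ) * k ^ 2) := by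
      rw [Hm, Finset.sum_mul_sum]; simp_rw [div_mul_div_comm, one_mul]
    simp_rw [Finset.sum_add_distrib]
    have e3 : ∀ a : ℝ, 2 / a = 2 * (1 / a) := fun a => by ring
    simp_rw [e3, ← Finset.mul_sum]
    rw [← e1, ← e2]; ring
  have hH : Hm n ≤ 1 + Real.log M := Hm_le_log hM
  have hQH := mul_le_mul (sum_sq_le n) hH (Hm_nonneg n) (by norm_num)
  rw [abs_le]
  constructor <;> linarith

/-- `E[a₁ a₂; a₁ a₂ ≤ M] ~ (log M)² / (2 log 2)` as `M → ∞`. -/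
lemma tendsto_integral_tr :
    Tendsto (fun M : ℝ => (∫ x, tr M x ∂gaussMeasure) / Real.log M ^ 2) atTop
      (nhds (1 / (2 * Real.log 2))) := by
  have hl : 0 < Real.log 2 := Real.log_pos (by norm_num)
  have hlim : Tendsto (fun M : ℝ => 11 * (1 / Real.log M + (1 / Real.log M) ^ 2) / Real.log 2)
      atTop (nhds 0) := by
    have h := Real.tendsto_log_atTop.inv_tendsto_atTop
    have := ((h.add (h.pow 2)).const_mul 11).div_const (Real.log 2)
    simpa [one_div] using this
  rw [tendsto_iff_norm_sub_tendsto_zero]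
  refine squeeze_zero' (Eventually.of_forall fun _ => norm_nonneg _) ?_ hlim
  filter_upwards [eventually_gt_atTop 1] with M hM
  have hL : 0 < Real.log M := Real.log_pos hM
  have hb := integral_tr_bounds hM.le
  set G := ∫ x, tr M x ∂gaussMeasure
  have e : G / Real.log M ^ 2 - 1 / (2 * Real.log 2) =
      (Real.log 2 * G - Real.log M ^ 2 / 2) / (Real.log 2 * Real.log M ^ 2) := by
    field_simp
  rw [e, Real.norm_eq_abs, abs_div, abs_of_pos (by positivity : 0 < Real.log 2 * Real.log M ^ 2),
    div_le_iff₀ (by positivity)]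
  refine hb.trans_eq ?_
  field_simp

/-! ### Stationarity and conclusion -/

lemma pq_shift {i : ℕ} (hi : 1 ≤ i) (x : ℝ) :
    pq i x = pq 1 (gaussMap^[i - 1] x) ∧ pq (i + 1) x = pq 2 (gaussMap^[i - 1] x) := by
  obtain ⟨m, rfl⟩ := Nat.exists_eq_add_of_le' hi
  refine ⟨rfl, ?_⟩
  simp only [pq, Nat.add_sub_cancel, Function.iterate_succ_apply']
  rfl

/-- By invariance of the Gauss measure all summands have the same expectation. -/
lemma integral_sum_eq {M : ℝ} (hM : 0 ≤ M) (N : ℕ) :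
    (∫ x, (∑ i ∈ Finset.Icc 1 N,
        if ((pq i x * pq (i + 1) x : ℕ) : ℝ) ≤ M then
          ((pq i x * pq (i + 1) x : ℕ) : ℝ) else 0) ∂gaussMeasure) =
      N * ∫ x, tr M x ∂gaussMeasure := by
  have h1 : ∀ x, (∑ i ∈ Finset.Icc 1 N,
        if ((pq i x * pq (i + 1) x : ℕ) : ℝ) ≤ M then
          ((pq i x * pq (i + 1) x : ℕ) : ℝ) else 0) =
      ∑ i ∈ Finset.Icc 1 N, tr M (gaussMap^[i - 1] x) := by
    intro x
    refine Finset.sum_congr rfl fun i hi => ?_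
    rw [(pq_shift (Finset.mem_Icc.1 hi).1 x).1, (pq_shift (Finset.mem_Icc.1 hi).1 x).2]
    rfl
  simp_rw [h1]
  have hmp : ∀ i : ℕ, MeasurePreserving (gaussMap^[i]) gaussMeasure gaussMeasure :=
    fun i => measurePreserving_gaussMap.iterate i
  rw [integral_finsetSum]
  · have h2 : ∀ i ∈ Finset.Icc 1 N, ∫ x, tr M (gaussMap^[i - 1] x) ∂gaussMeasure =
        ∫ x, tr M x ∂gaussMeasure := by
      intro i _
      have h := integral_map (μ := gaussMeasure) (hmp (i - 1)).measurable.aemeasurable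
        (measurable_tr M).aestronglyMeasurable
      rw [(hmp (i - 1)).map_eq] at h
      exact h.symm
    rw [Finset.sum_congr rfl h2]
    simp
  · intro i _
    have h := (hmp (i - 1)).integrable_comp_of_integrable (integrable_tr hM)
    simpa only [Function.comp_def] using h

/-- The truncation height `N (log N) ^ c` tends to infinity, and its logarithm is asymptotic to
`log N`; so the exponent `c` does not enter the limit. -/
lemma tendsto_height {c : ℝ} (hc : 0 < c) :
    Tendsto (fun N : ℕ => (N : ℝ) * Real.log N ^ c) atTop atTop ∧
    Tendsto (fun N : ℕ => Real.log ((N : ℝ) * Real.log N ^ c) / Real.log N) atTop (nhds 1) := by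
  have hlogN : Tendsto (fun N : ℕ => Real.log N) atTop atTop :=
    Real.tendsto_log_atTop.comp tendsto_natCast_atTop_atTop
  constructor
  · exact tendsto_natCast_atTop_atTop.atTop_mul_atTop₀ ((tendsto_rpow_atTop hc).comp hlogN)
  · have h := (Real.isLittleO_log_id_atTop.tendsto_div_nhds_zero.comp hlogN).const_mul c
    have h' := h.const_add 1
    simp only [mul_zero, add_zero] at h'
    refine h'.congr' ?_
    filter_upwards [hlogN.eventually_gt_atTop 0, eventually_gt_atTop 0] with N hN hN0
    have hN0' : (0 : ℝ) < N := by exact_mod_cast hN0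
    rw [Real.log_mul hN0'.ne' (Real.rpow_pos_of_pos hN c).ne', Real.log_rpow hN]
    simp only [Function.comp, id]
    field_simp

theorem expectation_truncated_sum (ε : ℝ) (hε : 0 < ε) :
    Tendsto
      (fun N : ℕ =>
        (∫ x, (∑ i ∈ Finset.Icc 1 N,
            if ((pq i x * pq (i + 1) x : ℕ) : ℝ) ≤ (N : ℝ) * Real.log N ^ (3 / 2 + ε) then
              ((pq i x * pq (i + 1) x : ℕ) : ℝ) else 0) ∂gaussMeasure) /
          ((N : ℝ) * Real.log N ^ 2))
      atTop (nhds (1 / (2 * Real.log 2))) := by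

  obtain ⟨h1, h2⟩ := tendsto_height (c := 3 / 2 + ε) (by positivity)
  have h3 := (tendsto_integral_tr.comp h1).mul (h2.pow 2)
  rw [one_pow, mul_one] at h3
  refine h3.congr' ?_
  have hlogN : Tendsto (fun N : ℕ => Real.log N) atTop atTop :=
    Real.tendsto_log_atTop.comp tendsto_natCast_atTop_atTop
  filter_upwards [h1.eventually_gt_atTop 1, hlogN.eventually_gt_atTop 0, eventually_gt_atTop 0]
    with N hM hN hN0
  have hN0' : (0 : ℝ) < N := by exact_mod_cast hN0
  have hL := Real.log_pos hM
  rw [integral_sum_eq (by linarith)]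
  simp only [Function.comp]
  generalize (N : ℝ) * Real.log N ^ (3 / 2 + ε) = M at *
  field_simp
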